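/- Let p > 1, let R > 0, let 𝓑_R = {ξ ∈ ℍⁿ : d(ξ) < R} be the Heisenberg ball and Ω = 𝓑_R \ {0}. Then for every smooth compactly supported function f on Ω, ∫_Ω |∇_H f|^p dξ ≥ ((p − 1)/p)^p · ∫_Ω (|z|^p/d^p) · (|f|^p/(R − d)^p) dξ. -/

import Mathlib

open MeasureTheory Real

noncomputable section

/-- The underlying space of the Heisenberg group `ℍⁿ = ℝⁿ × ℝⁿ × ℝ`,
with points `ξ = (x, y, t)` and `z = (x, y)`. -/
abbrev Heis (n : ℕ) : Type := (Fin n → ℝ) × (Fin n → ℝ) × ℝ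

/-- The left-invariant horizontal vector field `X_j = ∂/∂x_j + 2 y_j ∂/∂t`. -/
noncomputable def XH {n : ℕ} (j : Fin n) (f : Heis n → ℝ) (ξ : Heis n) : ℝ :=
  fderiv ℝ f ξ (Pi.single j 1, 0, 0) + 2 * ξ.2.1 j * fderiv ℝ f ξ (0, 0, 1)

/-- The left-invariant horizontal vector field `Y_j = ∂/∂y_j − 2 x_j ∂/∂t`. -/
noncomputable def YH {n : ℕ} (j : Fin n) (f : Heis n → ℝ) (ξ : Heis n) : ℝ :=
  fderiv ℝ f ξ (0, Pi.single j 1, 0) - 2 * ξ.1 j * fderiv ℝ f ξ (0, 0, 1)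

/-- The horizontal gradient `∇_H f = (X_1 f, …, X_n f, Y_1 f, …, Y_n f)`. -/
noncomputable def hGrad {n : ℕ} (f : Heis n → ℝ) (ξ : Heis n) : (Fin n → ℝ) × (Fin n → ℝ) :=
  (fun j => XH j f ξ, fun j => YH j f ξ)

/-- Euclidean length of a horizontal vector. -/
noncomputable def hNorm {n : ℕ} (v : (Fin n → ℝ) × (Fin n → ℝ)) : ℝ :=
  Real.sqrt (∑ j, v.1 j ^ 2 + ∑ j, v.2 j ^ 2)

/-- Euclidean inner product of horizontal vectors. -/
noncomputable def hDot {n : ℕ} (v w : (Fin n → ℝ) × (Fin n → ℝ)) : ℝ :=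
  ∑ j, v.1 j * w.1 j + ∑ j, v.2 j * w.2 j

/-- The horizontal divergence `div_H w = Σ_j (X_j w_j + Y_j w_{n+j})`. -/
noncomputable def hDiv {n : ℕ} (V : Heis n → (Fin n → ℝ) × (Fin n → ℝ)) (ξ : Heis n) : ℝ :=
  ∑ j, (XH j (fun η => (V η).1 j) ξ + YH j (fun η => (V η).2 j) ξ)

/-- The sub-Laplacian `Δ_H = Σ_j (X_j² + Y_j²) = div_H ∘ ∇_H`. -/
noncomputable def hLap {n : ℕ} (f : Heis n → ℝ) : Heis n → ℝ :=
  hDiv (hGrad f)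

/-- The `p`-sub-Laplacian `Δ_{H,p} f = div_H (|∇_H f|^{p−2} ∇_H f)`. -/
noncomputable def pLap {n : ℕ} (p : ℝ) (f : Heis n → ℝ) : Heis n → ℝ :=
  hDiv (fun ξ => hNorm (hGrad f ξ) ^ (p - 2) • hGrad f ξ)

/-- The Euclidean norm `|z|` of the horizontal component `z = (x, y)`. -/
noncomputable def zNorm {n : ℕ} (ξ : Heis n) : ℝ :=
  Real.sqrt (∑ j, ξ.1 j ^ 2 + ∑ j, ξ.2.1 j ^ 2)

/-- The Heisenberg gauge `d(z, t) = (|z|⁴ + t²)^{1/4}`. -/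
noncomputable def dH {n : ℕ} (ξ : Heis n) : ℝ :=
  ((∑ j, ξ.1 j ^ 2 + ∑ j, ξ.2.1 j ^ 2) ^ 2 + ξ.2.2 ^ 2) ^ (1 / 4 : ℝ)

/-- A smooth compactly supported function on `ℍⁿ \ {0}`. -/
def IsTestAwayZero {n : ℕ} (f : Heis n → ℝ) : Prop :=
  ContDiff ℝ (⊤ : ℕ∞) f ∧ HasCompactSupport f ∧ (0 : Heis n) ∉ tsupport f


/-- `|z|²`. -/
def sH {n : ℕ} (ξ : Heis n) : ℝ := ∑ j, ξ.1 j ^ 2 + ∑ j, ξ.2.1 j ^ 2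

/-- The Euclidean form of the horizontal field `d³ ∇_H d`. -/
def WE {n : ℕ} (ξ : Heis n) : Heis n :=
  (fun j => sH ξ * ξ.1 j + ξ.2.2 * ξ.2.1 j, fun j => sH ξ * ξ.2.1 j - ξ.2.2 * ξ.1 j,
    2 * ξ.2.2 * sH ξ)

lemma sH_nonneg {n : ℕ} (ξ : Heis n) : 0 ≤ sH ξ := by unfold sH; positivity

lemma contDiff_sH {n : ℕ} {m} : ContDiff ℝ m (sH : Heis n → ℝ) := by
  unfold sH; fun_prop

lemma continuous_sH {n : ℕ} : Continuous (sH : Heis n → ℝ) := by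
  unfold sH; fun_prop

lemma heis_decomp {n : ℕ} (v : Heis n) (L : Heis n →L[ℝ] ℝ) :
    L v = ∑ j, v.1 j * L (Pi.single j 1, 0, 0) + ∑ j, v.2.1 j * L (0, Pi.single j 1, 0)
      + v.2.2 * L (0, 0, 1) := by
  have h : v = ∑ j, v.1 j • ((Pi.single j 1, 0, 0) : Heis n)
      + ∑ j, v.2.1 j • ((0, Pi.single j 1, 0) : Heis n) + v.2.2 • ((0, 0, 1) : Heis n) := by
    ext i
    · simp [Prod.fst_sum, Finset.sum_apply, Pi.single_apply]
    · simp [Prod.fst_sum, Prod.snd_sum, Finset.sum_apply, Pi.single_apply]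
    · simp [Prod.snd_sum]
  conv_lhs => rw [h]
  simp only [map_add, map_sum, map_smul, smul_eq_mul]

lemma tangent_ineq {p a b : ℝ} (hp : 1 < p) (ha : 0 ≤ a) (hb : 0 ≤ b) :
    b ^ p + p * b ^ (p - 1) * (a - b) ≤ a ^ p := by
  rcases hb.eq_or_lt with rfl | hb
  · rw [Real.zero_rpow (by linarith), Real.zero_rpow (by linarith)]
    simpa using Real.rpow_nonneg ha p
  · have h := one_add_mul_self_le_rpow_one_add (s := a / b - 1) (by
      have : 0 ≤ a / b := by positivity
      linarith) hp.le
    have h2 : (1 + (a / b - 1)) = a / b := by ring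
    rw [h2, Real.div_rpow ha hb.le, le_div_iff₀ (by positivity)] at h
    have h3 : b ^ p = b ^ (p - 1) * b := by
      rw [← Real.rpow_add_one hb.ne']; ring_nf
    refine le_trans (le_of_eq ?_) h
    rw [h3]; field_simp

lemma cauchy_sum {n : ℕ} (a b c d : Fin n → ℝ) :
    |∑ j, a j * c j + ∑ j, b j * d j| ≤
      Real.sqrt (∑ j, a j ^ 2 + ∑ j, b j ^ 2) * Real.sqrt (∑ j, c j ^ 2 + ∑ j, d j ^ 2) := by
  have h := Finset.sum_mul_sq_le_sq_mul_sq (Finset.univ : Finset (Fin n ⊕ Fin n))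
    (Sum.elim a b) (Sum.elim c d)
  simp only [Fintype.sum_sum_type, Sum.elim_inl, Sum.elim_inr] at h
  rw [← Real.sqrt_mul (by positivity)]
  exact Real.abs_le_sqrt h

lemma fderiv_WE_bound {n : ℕ} (f : Heis n → ℝ) (ξ : Heis n) :
    |fderiv ℝ f ξ (WE ξ)| ≤
      Real.sqrt (sH ξ) * Real.sqrt (sH ξ ^ 2 + ξ.2.2 ^ 2) * hNorm (hGrad f ξ) := by
  have e1 : fderiv ℝ f ξ (WE ξ) = ∑ j, (WE ξ).1 j * (hGrad f ξ).1 j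
      + ∑ j, (WE ξ).2.1 j * (hGrad f ξ).2 j := by
    rw [heis_decomp]
    simp only [hGrad, XH, YH, mul_add, mul_sub, Finset.sum_add_distrib, Finset.sum_sub_distrib]
    have : (WE ξ).2.2 * (fderiv ℝ f ξ) (0, 0, 1) =
      ∑ j, (WE ξ).1 j * (2 * ξ.2.1 j * (fderiv ℝ f ξ) (0, 0, 1))
      - ∑ j, (WE ξ).2.1 j * (2 * ξ.1 j * (fderiv ℝ f ξ) (0, 0, 1)) := by
      rw [← Finset.sum_sub_distrib]
      have : (WE ξ).2.2 = ∑ j, 2 * ξ.2.2 * (ξ.1 j ^ 2 + ξ.2.1 j ^ 2) := by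
        rw [← Finset.mul_sum, Finset.sum_add_distrib]; rfl
      rw [this, Finset.sum_mul]
      refine Finset.sum_congr rfl fun j _ => ?_
      simp only [WE]; ring
    rw [this]; ring
  have e2 : ∑ j, (WE ξ).1 j ^ 2 + ∑ j, (WE ξ).2.1 j ^ 2 = sH ξ * (sH ξ ^ 2 + ξ.2.2 ^ 2) := by
    conv_rhs => rw [mul_comm]; arg 2; unfold sH
    rw [← Finset.sum_add_distrib, ← Finset.sum_add_distrib, Finset.mul_sum]
    refine Finset.sum_congr rfl fun j _ => ?_
    simp only [WE]; ring
  rw [e1]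
  refine (cauchy_sum _ _ _ _).trans ?_
  rw [e2, Real.sqrt_mul (sH_nonneg ξ)]
  rfl

lemma ibp_dir {n : ℕ} (a H : Heis n → ℝ) (ha : ContDiff ℝ 1 a) (hH : ContDiff ℝ 1 H)
    (hc : HasCompactSupport H) (v : Heis n) :
    Integrable (fun ξ => a ξ * fderiv ℝ H ξ v) ∧ Integrable (fun ξ => fderiv ℝ a ξ v * H ξ) ∧
    ∫ ξ, (a ξ * fderiv ℝ H ξ v + fderiv ℝ a ξ v * H ξ) = 0 := by
  have ha' : Continuous (fun ξ => fderiv ℝ a ξ v) :=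
    (ha.continuous_fderiv one_ne_zero).clm_apply continuous_const
  have hH' : Continuous (fun ξ => fderiv ℝ H ξ v) :=
    (hH.continuous_fderiv one_ne_zero).clm_apply continuous_const
  have hcH' : HasCompactSupport (fun ξ => fderiv ℝ H ξ v) := hc.fderiv_apply (𝕜 := ℝ) v
  have i1 : Integrable (fun ξ => a ξ * fderiv ℝ H ξ v) :=
    (ha.continuous.mul hH').integrable_of_hasCompactSupport hcH'.mul_left
  have i2 : Integrable (fun ξ => fderiv ℝ a ξ v * H ξ) :=
    (ha'.mul hH.continuous).integrable_of_hasCompactSupport hc.mul_left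
  have i3 : Integrable (fun ξ => a ξ * H ξ) :=
    (ha.continuous.mul hH.continuous).integrable_of_hasCompactSupport hc.mul_left
  refine ⟨i1, i2, ?_⟩
  have hv1 : (volume : Measure ((Fin n → ℝ) × ℝ)).IsAddHaarMeasure :=
    Measure.prod.instIsAddHaarMeasure _ _
  have hv2 : (volume : Measure (Heis n)).IsAddHaarMeasure :=
    Measure.prod.instIsAddHaarMeasure _ _
  rw [integral_add i1 i2, integral_mul_fderiv_eq_neg_fderiv_mul_of_integrable i2 i1 i3
    (fun x _ => ha.differentiable one_ne_zero x) (fun x _ => hH.differentiable one_ne_zero x)]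
  ring

/-- Line derivative helper. -/
lemma fderiv_eq_of_line {n : ℕ} {a : Heis n → ℝ} {ξ v : Heis n} {c : ℝ}
    (ha : DifferentiableAt ℝ a ξ) (h : HasDerivAt (fun τ : ℝ => a (ξ + τ • v)) c 0) :
    fderiv ℝ a ξ v = c := by
  have h1 := ha.hasFDerivAt.hasLineDerivAt v
  exact HasDerivAt.unique h1 h

lemma hasDerivAt_sH_line {n : ℕ} (ξ v : Heis n) :
    HasDerivAt (fun τ : ℝ => sH (ξ + τ • v))
      (∑ j, 2 * ξ.1 j * v.1 j + ∑ j, 2 * ξ.2.1 j * v.2.1 j) 0 := by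
  unfold sH
  have : ∀ (x w : ℝ), HasDerivAt (fun τ : ℝ => (x + τ * w) ^ 2) (2 * x * w) 0 := by
    intro x w
    have := (((hasDerivAt_id (0:ℝ)).mul_const w).const_add x).fun_pow 2
    simpa using this
  refine HasDerivAt.add ?_ ?_
  · exact HasDerivAt.fun_sum fun j _ => by simpa using this (ξ.1 j) (v.1 j)
  · exact HasDerivAt.fun_sum fun j _ => by simpa using this (ξ.2.1 j) (v.2.1 j)

lemma hasDerivAt_t_line {n : ℕ} (ξ v : Heis n) :
    HasDerivAt (fun τ : ℝ => (ξ + τ • v).2.2) v.2.2 0 := by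
  have := (((hasDerivAt_id (0:ℝ)).mul_const v.2.2).const_add ξ.2.2)
  simpa using this

lemma hasDerivAt_x_line {n : ℕ} (ξ v : Heis n) (j : Fin n) :
    HasDerivAt (fun τ : ℝ => (ξ + τ • v).1 j) (v.1 j) 0 := by
  have := (((hasDerivAt_id (0:ℝ)).mul_const (v.1 j)).const_add (ξ.1 j))
  simpa using this

lemma hasDerivAt_y_line {n : ℕ} (ξ v : Heis n) (j : Fin n) :
    HasDerivAt (fun τ : ℝ => (ξ + τ • v).2.1 j) (v.2.1 j) 0 := by
  have := (((hasDerivAt_id (0:ℝ)).mul_const (v.2.1 j)).const_add (ξ.2.1 j))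
  simpa using this

lemma ibp {n : ℕ} (H : Heis n → ℝ) (hH : ContDiff ℝ 1 H) (hc : HasCompactSupport H) :
    ∫ ξ, (fderiv ℝ H ξ (WE ξ) + (2 * n + 4) * sH ξ * H ξ) = 0 := by
  have s1 : ContDiff ℝ 1 (sH : Heis n → ℝ) := contDiff_sH
  have cx : ∀ j, ContDiff ℝ 1 (fun ξ : Heis n => (WE ξ).1 j) := by
    intro j; simp only [WE]; fun_prop
  have cy : ∀ j, ContDiff ℝ 1 (fun ξ : Heis n => (WE ξ).2.1 j) := by
    intro j; simp only [WE]; fun_prop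
  have ct : ContDiff ℝ 1 (fun ξ : Heis n => (WE ξ).2.2) := by
    simp only [WE]; fun_prop
  have dx : ∀ j (ξ : Heis n), fderiv ℝ (fun ξ : Heis n => (WE ξ).1 j) ξ (Pi.single j 1, 0, 0)
      = sH ξ + 2 * ξ.1 j ^ 2 := by
    intro j ξ
    refine fderiv_eq_of_line ((cx j).differentiable one_ne_zero ξ) ?_
    have := ((hasDerivAt_sH_line ξ (Pi.single j 1, 0, 0)).mul
      (hasDerivAt_x_line ξ (Pi.single j 1, 0, 0) j)).add
      ((hasDerivAt_t_line ξ (Pi.single j 1, 0, 0)).mul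
      (hasDerivAt_y_line ξ (Pi.single j 1, 0, 0) j))
    refine this.congr_deriv ?_
    simp [Pi.single_apply]; ring
  have dy : ∀ j (ξ : Heis n), fderiv ℝ (fun ξ : Heis n => (WE ξ).2.1 j) ξ (0, Pi.single j 1, 0)
      = sH ξ + 2 * ξ.2.1 j ^ 2 := by
    intro j ξ
    refine fderiv_eq_of_line ((cy j).differentiable one_ne_zero ξ) ?_
    have := ((hasDerivAt_sH_line ξ (0, Pi.single j 1, 0)).mul
      (hasDerivAt_y_line ξ (0, Pi.single j 1, 0) j)).sub
      ((hasDerivAt_t_line ξ (0, Pi.single j 1, 0)).mul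
      (hasDerivAt_x_line ξ (0, Pi.single j 1, 0) j))
    refine this.congr_deriv ?_
    simp [Pi.single_apply]; ring
  have dt : ∀ (ξ : Heis n), fderiv ℝ (fun ξ : Heis n => (WE ξ).2.2) ξ (0, 0, 1)
      = 2 * sH ξ := by
    intro ξ
    refine fderiv_eq_of_line (ct.differentiable one_ne_zero ξ) ?_
    have := ((hasDerivAt_t_line ξ (0, 0, 1)).const_mul 2).mul (hasDerivAt_sH_line ξ (0, 0, 1))
    refine this.congr_deriv ?_
    simp
  have Ix := fun j => ibp_dir _ H (cx j) hH hc (Pi.single j 1, 0, 0)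
  have Iy := fun j => ibp_dir _ H (cy j) hH hc (0, Pi.single j 1, 0)
  have It := ibp_dir _ H ct hH hc (0, 0, 1)
  have key : ∀ ξ : Heis n, fderiv ℝ H ξ (WE ξ) + (2 * n + 4) * sH ξ * H ξ =
     ∑ j, ((WE ξ).1 j * fderiv ℝ H ξ (Pi.single j 1, 0, 0) +
        fderiv ℝ (fun ξ : Heis n => (WE ξ).1 j) ξ (Pi.single j 1, 0, 0) * H ξ) +
     ∑ j, ((WE ξ).2.1 j * fderiv ℝ H ξ (0, Pi.single j 1, 0) +
        fderiv ℝ (fun ξ : Heis n => (WE ξ).2.1 j) ξ (0, Pi.single j 1, 0) * H ξ) +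
     ((WE ξ).2.2 * fderiv ℝ H ξ (0, 0, 1) +
        fderiv ℝ (fun ξ : Heis n => (WE ξ).2.2) ξ (0, 0, 1) * H ξ) := by
    intro ξ
    rw [heis_decomp (WE ξ)]
    simp only [dx, dy, dt, Finset.sum_add_distrib, ← Finset.sum_mul, ← Finset.mul_sum]
    simp only [Finset.sum_const, Finset.card_univ, Fintype.card_fin, nsmul_eq_mul]
    have : sH ξ = ∑ j, ξ.1 j ^ 2 + ∑ j, ξ.2.1 j ^ 2 := rfl
    linear_combination (2 * H ξ) * this
  simp_rw [key]
  rw [integral_add, integral_add, integral_finsetSum, integral_finsetSum]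
  · rw [Finset.sum_eq_zero (fun j _ => (Ix j).2.2), Finset.sum_eq_zero (fun j _ => (Iy j).2.2),
      It.2.2]; simp
  · exact fun j _ => (Iy j).1.add (Iy j).2.1
  · exact fun j _ => (Ix j).1.add (Ix j).2.1
  · exact integrable_finsetSum _ fun j _ => (Ix j).1.add (Ix j).2.1
  · exact integrable_finsetSum _ fun j _ => (Iy j).1.add (Iy j).2.1
  · exact (integrable_finsetSum _ fun j _ => (Ix j).1.add (Ix j).2.1).add
      (integrable_finsetSum _ fun j _ => (Iy j).1.add (Iy j).2.1)
  · exact It.1.add It.2.1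

lemma dH_eq {n : ℕ} (ξ : Heis n) : dH ξ = (sH ξ ^ 2 + ξ.2.2 ^ 2) ^ (1 / 4 : ℝ) := rfl

lemma dH_nonneg {n : ℕ} (ξ : Heis n) : 0 ≤ dH ξ := by rw [dH_eq]; positivity

lemma dH_sq {n : ℕ} (ξ : Heis n) : Real.sqrt (sH ξ ^ 2 + ξ.2.2 ^ 2) = dH ξ ^ 2 := by
  rw [dH_eq, Real.sqrt_eq_rpow, ← Real.rpow_mul_natCast (by positivity)]
  norm_num

lemma continuous_dH {n : ℕ} : Continuous (dH : Heis n → ℝ) := by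
  have := continuous_sH (n := n)
  have h : Continuous (fun ξ : Heis n => (sH ξ ^ 2 + ξ.2.2 ^ 2) ^ (1 / 4 : ℝ)) :=
    Continuous.rpow_const (by fun_prop) (fun _ => Or.inr (by norm_num))
  exact h

lemma N_pos {n : ℕ} {ξ : Heis n} (h : ξ ≠ 0) : 0 < sH ξ ^ 2 + ξ.2.2 ^ 2 := by
  by_contra hc
  apply h
  have h1 : sH ξ ^ 2 = 0 := by nlinarith [sq_nonneg (sH ξ), sq_nonneg ξ.2.2]
  have h2 : ξ.2.2 ^ 2 = 0 := by nlinarith [sq_nonneg (sH ξ), sq_nonneg ξ.2.2]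
  have h3 : sH ξ = 0 := by simpa using h1
  have hx : 0 ≤ ∑ j, ξ.1 j ^ 2 := by positivity
  have hy : 0 ≤ ∑ j, ξ.2.1 j ^ 2 := by positivity
  unfold sH at h3
  have hx0 : ∑ j, ξ.1 j ^ 2 = 0 := by linarith
  have hy0 : ∑ j, ξ.2.1 j ^ 2 = 0 := by linarith
  rw [Finset.sum_eq_zero_iff_of_nonneg (fun j _ => sq_nonneg _)] at hx0 hy0
  ext j
  · simpa using hx0 j (Finset.mem_univ j)
  · simpa using hy0 j (Finset.mem_univ j)
  · simpa using h2

lemma dH_pos {n : ℕ} {ξ : Heis n} (h : ξ ≠ 0) : 0 < dH ξ := by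
  have := N_pos h
  rw [dH_eq]; positivity

lemma WE_zero {n : ℕ} {ξ : Heis n} (h : sH ξ = 0) : WE ξ = 0 := by
  have hx : 0 ≤ ∑ j, ξ.1 j ^ 2 := by positivity
  have hy : 0 ≤ ∑ j, ξ.2.1 j ^ 2 := by positivity
  have h' := h
  unfold sH at h'
  have hx0 : ∑ j, ξ.1 j ^ 2 = 0 := by linarith
  have hy0 : ∑ j, ξ.2.1 j ^ 2 = 0 := by linarith
  rw [Finset.sum_eq_zero_iff_of_nonneg (fun j _ => sq_nonneg _)] at hx0 hy0
  have hx1 : ∀ j, ξ.1 j = 0 := fun j => by simpa using hx0 j (Finset.mem_univ j)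
  have hy1 : ∀ j, ξ.2.1 j = 0 := fun j => by simpa using hy0 j (Finset.mem_univ j)
  ext j <;> simp [WE, h, hx1, hy1]

lemma contDiffAt_dH {n : ℕ} {ξ : Heis n} (h : ξ ≠ 0) : ContDiffAt ℝ 1 (dH : Heis n → ℝ) ξ := by
  have := (contDiff_sH (n := n) (m := 1)).contDiffAt (x := ξ)
  have h : ContDiffAt ℝ 1 (fun ξ : Heis n => (sH ξ ^ 2 + ξ.2.2 ^ 2) ^ (1 / 4 : ℝ)) ξ :=
    ContDiffAt.rpow_const_of_ne (by fun_prop) (N_pos h).ne'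
  exact h

/-- The punctured ball. -/
def Om (n : ℕ) (R : ℝ) : Set (Heis n) := {ξ : Heis n | dH ξ < R} \ {0}

lemma isOpen_Om (n : ℕ) (R : ℝ) : IsOpen (Om n R) :=
  (isOpen_lt continuous_dH continuous_const).sdiff isClosed_singleton

/-- The scalar weight. -/
def GH {n : ℕ} (p R : ℝ) (ξ : Heis n) : ℝ := dH ξ ^ (-1 - p) * (R - dH ξ) ^ (1 - p)

/-- The regularized scalar function. -/
def HE {n : ℕ} (p R ε : ℝ) (f : Heis n → ℝ) (ξ : Heis n) : ℝ :=
  (sH ξ + ε) ^ ((p - 2) / 2) * GH p R ξ * |f ξ| ^ p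

/-- The regularized divergence. -/
def JE {n : ℕ} (p R ε : ℝ) (f : Heis n → ℝ) (ξ : Heis n) : ℝ :=
  (sH ξ + ε) ^ ((p - 2) / 2) * sH ξ * |f ξ| ^ p *
    (GH p R ξ * (2 * n + 3 - p + (p - 2) * (sH ξ / (sH ξ + ε))) +
      (p - 1) * dH ξ ^ (-p) * (R - dH ξ) ^ (-p)) +
  (sH ξ + ε) ^ ((p - 2) / 2) * GH p R ξ * (p * |f ξ| ^ (p - 2) * f ξ) * fderiv ℝ f ξ (WE ξ)

lemma contDiffAt_HE {n : ℕ} {p R ε : ℝ} (hp : 1 < p) (hε : 0 < ε) {f : Heis n → ℝ}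
    (hf : ContDiff ℝ 1 f) {ξ : Heis n} (h : ξ ∈ Om n R) : ContDiffAt ℝ 1 (HE p R ε f) ξ := by
  have h0 : ξ ≠ 0 := h.2
  have h1 : dH ξ < R := h.1
  have hd := contDiffAt_dH h0
  have hs := (contDiff_sH (n := n) (m := 1)).contDiffAt (x := ξ)
  have a1 : ContDiffAt ℝ 1 (fun ξ : Heis n => (sH ξ + ε) ^ ((p - 2) / 2)) ξ :=
    ContDiffAt.rpow_const_of_ne (by fun_prop) (by have := sH_nonneg ξ; positivity)
  have a2 : ContDiffAt ℝ 1 (fun ξ : Heis n => dH ξ ^ (-1 - p)) ξ :=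
    ContDiffAt.rpow_const_of_ne hd (dH_pos h0).ne'
  have a3 : ContDiffAt ℝ 1 (fun ξ : Heis n => (R - dH ξ) ^ (1 - p)) ξ :=
    ContDiffAt.rpow_const_of_ne (by fun_prop) (by linarith)
  have a4 : ContDiffAt ℝ 1 (fun ξ : Heis n => |f ξ| ^ p) ξ :=
    (hf.norm_rpow hp).contDiffAt
  exact (a1.mul (a2.mul a3)).mul a4

lemma HE_eventually_zero {n : ℕ} {p R ε : ℝ} (hp : 1 < p) {f : Heis n → ℝ} {ξ : Heis n}
    (h : ξ ∉ tsupport f) : HE p R ε f =ᶠ[nhds ξ] 0 := by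
  filter_upwards [notMem_tsupport_iff_eventuallyEq.1 h] with η hη
  simp [HE, hη, Real.zero_rpow (by linarith : p ≠ 0)]

lemma contDiff_HE {n : ℕ} {p R ε : ℝ} (hp : 1 < p) (hε : 0 < ε) {f : Heis n → ℝ}
    (hf : ContDiff ℝ 1 f) (hfs : tsupport f ⊆ Om n R) : ContDiff ℝ 1 (HE p R ε f) := by
  rw [contDiff_iff_contDiffAt]
  intro ξ
  by_cases h : ξ ∈ tsupport f
  · exact contDiffAt_HE hp hε hf (hfs h)
  · exact (contDiffAt_const (c := (0:ℝ))).congr_of_eventuallyEq (HE_eventually_zero hp h)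

lemma hcs_HE {n : ℕ} {p R ε : ℝ} (hp : 1 < p) {f : Heis n → ℝ}
    (hfc : HasCompactSupport f) : HasCompactSupport (HE p R ε f) :=
  hfc.mono' fun ξ hξ => by
    by_contra h
    exact hξ (HE_eventually_zero hp h).self_of_nhds

lemma JE_eq_Om {n : ℕ} {p R ε : ℝ} (hp : 1 < p) (hε : 0 < ε) {f : Heis n → ℝ}
    (hf : ContDiff ℝ 1 f) {ξ : Heis n} (h : ξ ∈ Om n R) :
    fderiv ℝ (HE p R ε f) ξ (WE ξ) + (2 * n + 4) * sH ξ * HE p R ε f ξ = JE p R ε f ξ := by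
  have h0 : ξ ≠ 0 := h.2
  have h1 : dH ξ < R := h.1
  have hd0 := dH_pos h0
  have hs0 := sH_nonneg ξ
  have hN := N_pos h0
  have hse : 0 < sH ξ + ε := by positivity
  have hRd : 0 < R - dH ξ := by linarith
  have hs : HasDerivAt (fun τ : ℝ => sH (ξ + τ • WE ξ)) (2 * sH ξ ^ 2) 0 := by
    refine (hasDerivAt_sH_line ξ (WE ξ)).congr_deriv ?_
    rw [← Finset.sum_add_distrib]
    have : 2 * sH ξ ^ 2 = ∑ j, 2 * sH ξ * (ξ.1 j ^ 2 + ξ.2.1 j ^ 2) := by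
      rw [← Finset.mul_sum, Finset.sum_add_distrib]
      change _ = 2 * sH ξ * sH ξ
      ring
    rw [this]
    refine Finset.sum_congr rfl fun j _ => ?_
    simp only [WE]; ring
  have ht := hasDerivAt_t_line ξ (WE ξ)
  have e0 : ξ + (0:ℝ) • WE ξ = ξ := by simp
  have hd : HasDerivAt (fun τ : ℝ => dH (ξ + τ • WE ξ)) (sH ξ * dH ξ) 0 := by
    have := ((hs.fun_pow 2).add (ht.fun_pow 2)).rpow_const (p := 1 / 4)
      (Or.inl (by simpa using hN.ne'))
    refine this.congr_deriv ?_
    simp only [e0, Pi.add_apply]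
    rw [dH_eq, Real.rpow_sub_one hN.ne']
    simp only [WE]
    field_simp
    ring
  have hφ : HasDerivAt (fun τ : ℝ => (sH (ξ + τ • WE ξ) + ε) ^ ((p - 2) / 2))
      ((sH ξ + ε) ^ ((p - 2) / 2) * ((p - 2) * (sH ξ / (sH ξ + ε))) * sH ξ) 0 := by
    refine ((hs.add_const ε).rpow_const (Or.inl (by simpa using hse.ne'))).congr_deriv ?_
    simp only [e0]
    rw [Real.rpow_sub_one hse.ne']
    field_simp
  have hG : HasDerivAt (fun τ : ℝ => GH p R (ξ + τ • WE ξ))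
      (GH p R ξ * (-1 - p) * sH ξ + (p - 1) * sH ξ * dH ξ ^ (-p) * (R - dH ξ) ^ (-p)) 0 := by
    have := (hd.rpow_const (p := -1 - p) (Or.inl (by simpa using hd0.ne'))).mul
      ((hd.const_sub R).rpow_const (p := 1 - p) (Or.inl (by simpa using hRd.ne')))
    refine this.congr_deriv ?_
    simp only [e0]
    have q1 : dH ξ ^ (-1 - p) = dH ξ ^ (-p) / dH ξ := by
      rw [← Real.rpow_sub_one hd0.ne']; congr 1; ring
    have q2 : (1 - p - 1) = -p := by ring
    rw [GH, Real.rpow_sub_one hd0.ne', q1, q2]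
    field_simp
    ring
  have hF : HasDerivAt (fun τ : ℝ => |f (ξ + τ • WE ξ)| ^ p)
      (p * |f ξ| ^ (p - 2) * f ξ * fderiv ℝ f ξ (WE ξ)) 0 := by
    have l : HasDerivAt (fun τ : ℝ => f (ξ + τ • WE ξ)) (fderiv ℝ f ξ (WE ξ)) 0 :=
      (hf.differentiable one_ne_zero ξ).hasFDerivAt.hasLineDerivAt (WE ξ)
    have := (hasDerivAt_abs_rpow (f (ξ + (0:ℝ) • WE ξ)) hp).comp (0:ℝ) l
    rw [e0] at this
    exact this
  have hH := fderiv_eq_of_line ((contDiffAt_HE hp hε hf h).differentiableAt one_ne_zero)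
    ((hφ.mul hG).mul hF)
  rw [hH]
  simp only [e0, JE, HE, Pi.mul_apply]
  ring

lemma fderiv_zero_of {n : ℕ} {f : Heis n → ℝ} {ξ : Heis n} (h : ξ ∉ tsupport f) :
    fderiv ℝ f ξ = 0 := by
  rw [(notMem_tsupport_iff_eventuallyEq.1 h).fderiv_eq]
  simp

lemma JE_zero {n : ℕ} {p R ε : ℝ} (hp : 1 < p) {f : Heis n → ℝ} {ξ : Heis n}
    (h : ξ ∉ tsupport f) : JE p R ε f ξ = 0 := by
  simp [JE, image_eq_zero_of_notMem_tsupport h, Real.zero_rpow (by linarith : p ≠ 0)]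

lemma JE_eq {n : ℕ} {p R ε : ℝ} (hp : 1 < p) (hε : 0 < ε) {f : Heis n → ℝ}
    (hf : ContDiff ℝ 1 f) (hfs : tsupport f ⊆ Om n R) (ξ : Heis n) :
    fderiv ℝ (HE p R ε f) ξ (WE ξ) + (2 * n + 4) * sH ξ * HE p R ε f ξ = JE p R ε f ξ := by
  by_cases h : ξ ∈ tsupport f
  · exact JE_eq_Om hp hε hf (hfs h)
  · rw [JE_zero hp h, (HE_eventually_zero hp h).fderiv_eq, (HE_eventually_zero hp h).self_of_nhds]
    simp

lemma integral_JE {n : ℕ} {p R ε : ℝ} (hp : 1 < p) (hε : 0 < ε) {f : Heis n → ℝ}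
    (hf : ContDiff ℝ 1 f) (hfc : HasCompactSupport f) (hfs : tsupport f ⊆ Om n R) :
    ∫ ξ, JE p R ε f ξ = 0 := by
  simp_rw [← JE_eq hp hε hf hfs]
  exact ibp _ (contDiff_HE hp hε hf hfs) (hcs_HE hp hfc)

lemma continuous_JE {n : ℕ} {p R ε : ℝ} (hp : 1 < p) (hε : 0 < ε) {f : Heis n → ℝ}
    (hf : ContDiff ℝ 1 f) (hfs : tsupport f ⊆ Om n R) : Continuous (JE p R ε f) := by
  have e : JE p R ε f = fun ξ => fderiv ℝ (HE p R ε f) ξ (WE ξ)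
      + (2 * n + 4) * sH ξ * HE p R ε f ξ := funext fun ξ => (JE_eq hp hε hf hfs ξ).symm
  have c1 := contDiff_HE hp hε hf hfs
  have cs := continuous_sH (n := n)
  have cW : Continuous (WE : Heis n → Heis n) := by unfold WE; fun_prop
  have c2 := (c1.continuous_fderiv one_ne_zero).clm_apply cW
  have c3 := c1.continuous
  rw [e]
  exact c2.add ((continuous_const.mul cs).mul c3)

lemma integrable_of_Om {n : ℕ} {R : ℝ} {f F : Heis n → ℝ} (hfc : HasCompactSupport f)
    (hfs : tsupport f ⊆ Om n R) (hF : ContinuousOn F (Om n R))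
    (hF0 : ∀ ξ, ξ ∉ tsupport f → F ξ = 0) : Integrable F := by
  have hc : Continuous F := by
    rw [continuous_iff_continuousAt]
    intro ξ
    by_cases h : ξ ∈ tsupport f
    · exact hF.continuousAt ((isOpen_Om n R).mem_nhds (hfs h))
    · have : F =ᶠ[nhds ξ] fun _ => 0 := by
        filter_upwards [(isClosed_tsupport f).isOpen_compl.mem_nhds h] with η hη
        exact hF0 η hη
      exact continuousAt_const.congr this.symm
  refine hc.integrable_of_hasCompactSupport (hfc.mono' fun ξ hξ => ?_)
  by_contra h
  exact hξ (hF0 ξ h)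

lemma continuous_hNorm {n : ℕ} {f : Heis n → ℝ} (hf : ContDiff ℝ 1 f) :
    Continuous (fun ξ => hNorm (hGrad f ξ)) := by
  have h := hf.continuous_fderiv one_ne_zero
  unfold hNorm hGrad XH YH
  fun_prop

lemma hNorm_nonneg {n : ℕ} (v : (Fin n → ℝ) × (Fin n → ℝ)) : 0 ≤ hNorm v := Real.sqrt_nonneg _

lemma hNorm_zero {n : ℕ} {f : Heis n → ℝ} {ξ : Heis n} (h : ξ ∉ tsupport f) :
    hNorm (hGrad f ξ) = 0 := by
  simp [hNorm, hGrad, XH, YH, fderiv_zero_of h]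

/-- Dominating function. -/
def ME {n : ℕ} (p R : ℝ) (f : Heis n → ℝ) (ξ : Heis n) : ℝ :=
  (sH ξ + 1) ^ (p / 2) * |f ξ| ^ p *
    (GH p R ξ * (2 * n + 3 + p + |p - 2|) +
      (p - 1) * dH ξ ^ (-p) * (R - dH ξ) ^ (-p)) +
  (sH ξ + 1) ^ ((p - 1) / 2) * GH p R ξ * (p * |f ξ| ^ (p - 1)) *
    (dH ξ ^ 2 * hNorm (hGrad f ξ))

lemma integrable_ME {n : ℕ} {p R : ℝ} (hp : 1 < p) {f : Heis n → ℝ}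
    (hf : ContDiff ℝ 1 f) (hfc : HasCompactSupport f) (hfs : tsupport f ⊆ Om n R) :
    Integrable (ME p R f) := by
  refine integrable_of_Om hfc hfs ?_ ?_
  · have cs : ContinuousOn (sH : Heis n → ℝ) (Om n R) := continuous_sH.continuousOn
    have cd : ContinuousOn (dH : Heis n → ℝ) (Om n R) := continuous_dH.continuousOn
    have cf : ContinuousOn f (Om n R) := hf.continuous.continuousOn
    have ch : ContinuousOn (fun ξ => hNorm (hGrad f ξ)) (Om n R) :=
      (continuous_hNorm hf).continuousOn
    have c1 : ∀ q : ℝ, ContinuousOn (fun ξ : Heis n => dH ξ ^ q) (Om n R) := fun q =>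
      cd.rpow_const fun ξ h => Or.inl (dH_pos h.2).ne'
    have c2 : ∀ q : ℝ, ContinuousOn (fun ξ : Heis n => (R - dH ξ) ^ q) (Om n R) := fun q =>
      (continuousOn_const.sub cd).rpow_const fun ξ h => Or.inl (sub_pos.2 h.1).ne'
    have c3 : ∀ q : ℝ, 0 ≤ q → ContinuousOn (fun ξ : Heis n => |f ξ| ^ q) (Om n R) :=
      fun q hq => cf.abs.rpow_const fun ξ h => Or.inr hq
    have c4 : ∀ q : ℝ, ContinuousOn (fun ξ : Heis n => (sH ξ + 1) ^ q) (Om n R) := fun q =>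
      (cs.add continuousOn_const).rpow_const fun ξ h => Or.inl (by
        have := sH_nonneg ξ; exact (by linarith : 0 < sH ξ + 1).ne')
    have cG : ContinuousOn (fun ξ : Heis n => GH p R ξ) (Om n R) := (c1 _).mul (c2 _)
    unfold ME
    exact (((c4 _).mul (c3 p (by linarith))).mul ((cG.mul continuousOn_const).add
      ((continuousOn_const.mul (c1 _)).mul (c2 _)))).add
      ((((c4 _).mul cG).mul (continuousOn_const.mul (c3 _ (by linarith)))).mul
        ((cd.pow 2).mul ch))
  · intro ξ h
    simp [ME, image_eq_zero_of_notMem_tsupport h, hNorm_zero h,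
      Real.zero_rpow (by linarith : p ≠ 0)]

lemma abs_rpow_mul {p x : ℝ} (hp : 1 < p) : |p * |x| ^ (p - 2) * x| = p * |x| ^ (p - 1) := by
  rw [abs_mul, abs_mul, abs_of_pos (by linarith : 0 < p), abs_of_nonneg (by positivity), mul_assoc]
  congr 1
  rcases eq_or_ne x 0 with rfl | hx
  · simp [Real.zero_rpow (by linarith : p - 1 ≠ 0)]
  · rw [← Real.rpow_add_one (abs_ne_zero.2 hx)]; congr 1; ring

lemma GH_nonneg {n : ℕ} {p R : ℝ} {ξ : Heis n} (h : ξ ∈ Om n R) : 0 ≤ GH p R ξ :=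
  mul_nonneg (Real.rpow_nonneg (dH_nonneg ξ) _) (Real.rpow_nonneg (sub_pos.2 h.1).le _)

lemma JE_bound {n : ℕ} {p R ε : ℝ} (hp : 1 < p) (hε : 0 < ε) (hε1 : ε ≤ 1) {f : Heis n → ℝ}
    (hfs : tsupport f ⊆ Om n R) (ξ : Heis n) : ‖JE p R ε f ξ‖ ≤ ME p R f ξ := by
  by_cases h : ξ ∈ tsupport f
  · have hO := hfs h
    have hs0 := sH_nonneg ξ
    have hse : 0 < sH ξ + ε := by positivity
    have hG := GH_nonneg (p := p) hO
    have hd := dH_pos hO.2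
    have hR : 0 < R - dH ξ := sub_pos.2 hO.1
    have hA := hNorm_nonneg (hGrad f ξ)
    have b1 : (sH ξ + ε) ^ ((p - 2) / 2) * sH ξ ≤ (sH ξ + 1) ^ (p / 2) := by
      calc (sH ξ + ε) ^ ((p - 2) / 2) * sH ξ ≤ (sH ξ + ε) ^ ((p - 2) / 2) * (sH ξ + ε) := by
            gcongr; linarith
        _ = (sH ξ + ε) ^ (p / 2) := by
            rw [← Real.rpow_add_one hse.ne']; congr 1; ring
        _ ≤ _ := by gcongr
    have b2 : (sH ξ + ε) ^ ((p - 2) / 2) * Real.sqrt (sH ξ) ≤ (sH ξ + 1) ^ ((p - 1) / 2) := by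
      calc (sH ξ + ε) ^ ((p - 2) / 2) * Real.sqrt (sH ξ)
          ≤ (sH ξ + ε) ^ ((p - 2) / 2) * Real.sqrt (sH ξ + ε) := by
            gcongr; linarith
        _ = (sH ξ + ε) ^ ((p - 1) / 2) := by
            rw [Real.sqrt_eq_rpow, ← Real.rpow_add hse]; congr 1; ring
        _ ≤ _ := by gcongr
    have b3 : |2 * n + 3 - p + (p - 2) * (sH ξ / (sH ξ + ε))| ≤ 2 * n + 3 + p + |p - 2| := by
      have q0 : 0 ≤ sH ξ / (sH ξ + ε) := by positivity
      have q : sH ξ / (sH ξ + ε) ≤ 1 := by rw [div_le_one hse]; linarith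
      have q2 : |(p - 2) * (sH ξ / (sH ξ + ε))| ≤ |p - 2| := by
        rw [abs_mul, abs_of_nonneg q0]
        exact mul_le_of_le_one_right (abs_nonneg _) q
      have q3 : |2 * (n:ℝ) + 3 - p| ≤ 2 * n + 3 + p := by
        rw [abs_le]; constructor <;> [skip; linarith]
        have : (0:ℝ) ≤ n := Nat.cast_nonneg n
        linarith
      exact (abs_add_le _ _).trans (add_le_add q3 q2)
    have b4 := fderiv_WE_bound f ξ
    rw [dH_sq] at b4
    rw [Real.norm_eq_abs]
    unfold JE ME
    refine (abs_add_le _ _).trans (add_le_add ?_ ?_)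
    · rw [abs_mul, abs_of_nonneg (by positivity : 0 ≤ (sH ξ + ε) ^ ((p - 2) / 2) * sH ξ * |f ξ| ^ p)]
      have hp1 : 0 ≤ p - 1 := by linarith
      gcongr
      refine (abs_add_le _ _).trans (add_le_add ?_ ?_)
      · rw [abs_mul, abs_of_nonneg hG]; gcongr
      · rw [abs_of_nonneg (by positivity)]
    · rw [abs_mul, abs_mul, abs_rpow_mul hp, abs_of_nonneg
        (by positivity : 0 ≤ (sH ξ + ε) ^ ((p - 2) / 2) * GH p R ξ)]
      have hp1 : 0 ≤ p := by linarith
      calc (sH ξ + ε) ^ ((p - 2) / 2) * GH p R ξ * (p * |f ξ| ^ (p - 1)) * |fderiv ℝ f ξ (WE ξ)|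
          ≤ (sH ξ + ε) ^ ((p - 2) / 2) * GH p R ξ * (p * |f ξ| ^ (p - 1)) *
            (Real.sqrt (sH ξ) * dH ξ ^ 2 * hNorm (hGrad f ξ)) := by gcongr
        _ = ((sH ξ + ε) ^ ((p - 2) / 2) * Real.sqrt (sH ξ)) * GH p R ξ * (p * |f ξ| ^ (p - 1)) *
            (dH ξ ^ 2 * hNorm (hGrad f ξ)) := by ring
        _ ≤ _ := by gcongr
  · rw [JE_zero hp h]
    simp [ME, image_eq_zero_of_notMem_tsupport h, hNorm_zero h,
      Real.zero_rpow (by linarith : p ≠ 0)]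

lemma JE_tendsto {n : ℕ} {p R : ℝ} {f : Heis n → ℝ} (ξ : Heis n) {u : ℕ → ℝ}
    (hu : Filter.Tendsto u Filter.atTop (nhds 0)) :
    Filter.Tendsto (fun m => JE p R (u m) f ξ) Filter.atTop (nhds (JE p R 0 f ξ)) := by
  rcases (sH_nonneg ξ).eq_or_lt with h | h
  · have : ∀ ε, JE p R ε f ξ = 0 := by
      intro ε
      simp [JE, ← h, WE_zero h.symm]
    simp only [this]; exact tendsto_const_nhds
  · have c1 : ContinuousAt (fun ε : ℝ => (sH ξ + ε) ^ ((p - 2) / 2)) 0 :=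
      ContinuousAt.rpow_const (by fun_prop) (Or.inl (by simpa using h.ne'))
    have c2 : ContinuousAt (fun ε : ℝ => sH ξ / (sH ξ + ε)) 0 :=
      ContinuousAt.div (by fun_prop) (by fun_prop) (by simpa using h.ne')
    have : ContinuousAt (fun ε : ℝ => JE p R ε f ξ) 0 := by
      unfold JE
      fun_prop
    exact this.tendsto.comp hu

lemma J0_facts {n : ℕ} {p R : ℝ} (hp : 1 < p) {f : Heis n → ℝ}
    (hf : ContDiff ℝ 1 f) (hfc : HasCompactSupport f) (hfs : tsupport f ⊆ Om n R) :
    Integrable (JE p R 0 f) ∧ ∫ ξ, JE p R 0 f ξ = 0 := by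
  have hu := tendsto_one_div_add_atTop_nhds_zero_nat (𝕜 := ℝ)
  have hpos : ∀ m : ℕ, (0:ℝ) < 1 / ((m:ℝ) + 1) := fun m => by positivity
  have hle : ∀ m : ℕ, 1 / ((m:ℝ) + 1) ≤ 1 := fun m => by
    rw [div_le_one (by positivity)]; have : (0:ℝ) ≤ m := Nat.cast_nonneg m; linarith
  have hM := integrable_ME hp hf hfc hfs
  have hmeas : ∀ m : ℕ, AEStronglyMeasurable (JE p R (1 / ((m:ℝ) + 1)) f) volume := fun m =>
    (continuous_JE hp (hpos m) hf hfs).aestronglyMeasurable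
  have hb : ∀ (m : ℕ) (ξ : Heis n), ‖JE p R (1 / ((m:ℝ) + 1)) f ξ‖ ≤ ME p R f ξ := fun m ξ =>
    JE_bound hp (hpos m) (hle m) hfs ξ
  have hlim : ∀ ξ : Heis n, Filter.Tendsto (fun m : ℕ => JE p R (1 / ((m:ℝ) + 1)) f ξ)
      Filter.atTop (nhds (JE p R 0 f ξ)) := fun ξ => JE_tendsto ξ hu
  constructor
  · refine hM.mono' (aestronglyMeasurable_of_tendsto_ae Filter.atTop hmeas
      (Filter.Eventually.of_forall hlim)) (Filter.Eventually.of_forall fun ξ => ?_)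
    exact le_of_tendsto (hlim ξ).norm (Filter.Eventually.of_forall fun m => hb m ξ)
  · have := tendsto_integral_of_dominated_convergence (ME p R f) hmeas hM
      (fun m => Filter.Eventually.of_forall (hb m)) (Filter.Eventually.of_forall hlim)
    simp only [fun m : ℕ => integral_JE hp (hpos m) hf hfc hfs] at this
    exact tendsto_nhds_unique this tendsto_const_nhds

lemma pointwise {n : ℕ} {p R : ℝ} (hp : 1 < p) {f : Heis n → ℝ} {ξ : Heis n}
    (hO : ξ ∈ Om n R) :
    ((p - 1) / p) ^ p * (zNorm ξ ^ p / dH ξ ^ p * (|f ξ| ^ p / (R - dH ξ) ^ p)) ≤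
      hNorm (hGrad f ξ) ^ p + ((p - 1) / p) ^ (p - 1) * JE p R 0 f ξ := by
  have hd := dH_pos hO.2
  have hR : 0 < R - dH ξ := sub_pos.2 hO.1
  have hA := hNorm_nonneg (hGrad f ξ)
  have hz : zNorm ξ = Real.sqrt (sH ξ) := rfl
  have hp0 : 0 < p := by linarith
  have hp1 : 0 < p - 1 := by linarith
  rcases (sH_nonneg ξ).eq_or_lt with h | h
  · have : JE p R 0 f ξ = 0 := by simp [JE, ← h, WE_zero h.symm]
    rw [this, hz, ← h]
    simp only [Real.sqrt_zero, Real.zero_rpow hp0.ne', zero_div, zero_mul, mul_zero, add_zero]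
    positivity
  · have hz0 : 0 < zNorm ξ := by rw [hz]; positivity
    have hs : sH ξ = zNorm ξ ^ 2 := by rw [hz, Real.sq_sqrt h.le]
    set A := hNorm (hGrad f ξ)
    set c := (p - 1) / p with hc
    have hc0 : 0 < c := by positivity
    set B := zNorm ξ * |f ξ| / (dH ξ * (R - dH ξ)) with hB
    have hB0 : 0 ≤ B := by positivity
    have hBq : ∀ q : ℝ, B ^ q = zNorm ξ ^ q * |f ξ| ^ q * dH ξ ^ (-q) * (R - dH ξ) ^ (-q) := by
      intro q
      rw [hB, Real.div_rpow (by positivity) (by positivity), Real.mul_rpow hz0.le (abs_nonneg _),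
        Real.mul_rpow hd.le hR.le, Real.rpow_neg hd.le, Real.rpow_neg hR.le]
      field_simp
    have hBp : zNorm ξ ^ p / dH ξ ^ p * (|f ξ| ^ p / (R - dH ξ) ^ p) = B ^ p := by
      rw [hBq, Real.rpow_neg hd.le, Real.rpow_neg hR.le]
      field_simp
    have hG := GH_nonneg (p := p) hO
    have s0 : sH ξ ^ ((p - 2) / 2) = zNorm ξ ^ (p - 2) := by
      rw [hs, ← Real.rpow_natCast, ← Real.rpow_mul hz0.le]; congr 1; push_cast; ring
    have s1 : sH ξ ^ ((p - 2) / 2) * sH ξ = zNorm ξ ^ p := by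
      rw [s0, hs, ← Real.rpow_natCast, ← Real.rpow_add hz0]; congr 1; push_cast; ring
    have s2 : sH ξ ^ ((p - 2) / 2) * zNorm ξ = zNorm ξ ^ (p - 1) := by
      rw [s0, ← Real.rpow_add_one hz0.ne']; congr 1; ring
    have g1 : GH p R ξ * dH ξ ^ 2 = dH ξ ^ (-(p - 1)) * (R - dH ξ) ^ (-(p - 1)) := by
      have : dH ξ ^ (-(p - 1)) = dH ξ ^ (-1 - p) * dH ξ ^ 2 := by
        rw [← Real.rpow_natCast, ← Real.rpow_add hd]; congr 1; push_cast; ring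
      rw [this, GH, neg_sub]; ring
    have b4 := fderiv_WE_bound f ξ
    rw [dH_sq, ← hz] at b4
    have third : |sH ξ ^ ((p - 2) / 2) * GH p R ξ * (p * |f ξ| ^ (p - 2) * f ξ)
        * fderiv ℝ f ξ (WE ξ)| ≤ p * B ^ (p - 1) * A := by
      rw [abs_mul, abs_mul, abs_rpow_mul hp, abs_of_nonneg
        (by positivity : 0 ≤ sH ξ ^ ((p - 2) / 2) * GH p R ξ)]
      calc sH ξ ^ ((p - 2) / 2) * GH p R ξ * (p * |f ξ| ^ (p - 1)) * |fderiv ℝ f ξ (WE ξ)|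
          ≤ sH ξ ^ ((p - 2) / 2) * GH p R ξ * (p * |f ξ| ^ (p - 1)) *
            (zNorm ξ * dH ξ ^ 2 * A) := by gcongr
        _ = (sH ξ ^ ((p - 2) / 2) * zNorm ξ) * (GH p R ξ * dH ξ ^ 2) * (p * |f ξ| ^ (p - 1)) * A := by
            ring
        _ = _ := by rw [s2, g1, hBq]; ring
    have hJ : (p - 1) * B ^ p - p * B ^ (p - 1) * A ≤ JE p R 0 f ξ := by
      have t := (abs_le.1 third).1
      have e : JE p R 0 f ξ = zNorm ξ ^ p * |f ξ| ^ p * GH p R ξ * (2 * n + 1) + (p - 1) * B ^ p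
          + sH ξ ^ ((p - 2) / 2) * GH p R ξ * (p * |f ξ| ^ (p - 2) * f ξ)
            * fderiv ℝ f ξ (WE ξ) := by
        rw [JE, add_zero, div_self h.ne', s1, hBq]; ring
      have : 0 ≤ zNorm ξ ^ p * |f ξ| ^ p * GH p R ξ * (2 * n + 1) := by positivity
      rw [e]; linarith
    have ht := tangent_ineq hp hA (mul_nonneg hc0.le hB0)
    rw [Real.mul_rpow hc0.le hB0, Real.mul_rpow hc0.le hB0] at ht
    have k1 : c ^ p = c ^ (p - 1) * c := by rw [← Real.rpow_add_one hc0.ne']; congr 1; ring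
    have k2 : B ^ p = B ^ (p - 1) * B := by
      rcases hB0.eq_or_lt with hb | hb
      · rw [← hb, Real.zero_rpow hp0.ne']; simp
      · rw [← Real.rpow_add_one hb.ne']; congr 1; ring
    have k3 : p * c = p - 1 := by rw [hc]; field_simp
    rw [hBp]
    have hJ' := mul_le_mul_of_nonneg_left hJ (Real.rpow_nonneg hc0.le (p - 1))
    have e2 : p * (c ^ (p - 1) * B ^ (p - 1)) * (A - c * B) =
        c ^ (p - 1) * (p * B ^ (p - 1) * A) - c ^ (p - 1) * ((p - 1) * B ^ p) := by
      rw [k2, ← k3]; ring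
    rw [e2] at ht
    rw [mul_sub] at hJ'
    linarith

/-- Example 4.5: weighted Hardy inequality on the punctured
Heisenberg ball `Ω = 𝓑_R \ {0}` with distance weight `R − d`. -/
theorem hardy_punctured_ball_Heisenberg
    (n : ℕ) (p R : ℝ) (hp : 1 < p) (hR : 0 < R)
    (f : Heis n → ℝ) (hf : ContDiff ℝ (⊤ : ℕ∞) f) (hfc : HasCompactSupport f)
    (hfs : tsupport f ⊆ {ξ : Heis n | dH ξ < R} \ {0}) :
    ((p - 1) / p) ^ p *
        ∫ ξ in {ξ : Heis n | dH ξ < R} \ {0},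
          zNorm ξ ^ p / dH ξ ^ p * (|f ξ| ^ p / (R - dH ξ) ^ p) ≤
      ∫ ξ in {ξ : Heis n | dH ξ < R} \ {0}, hNorm (hGrad f ξ) ^ p := by
  have hf1 : ContDiff ℝ 1 f := hf.of_le (by exact_mod_cast le_top)
  have hp0 : p ≠ 0 := by linarith
  change tsupport f ⊆ Om n R at hfs
  change ((p - 1) / p) ^ p * ∫ ξ in Om n R,
          zNorm ξ ^ p / dH ξ ^ p * (|f ξ| ^ p / (R - dH ξ) ^ p) ≤
      ∫ ξ in Om n R, hNorm (hGrad f ξ) ^ p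
  have zB : ∀ ξ : Heis n, ξ ∉ tsupport f →
      zNorm ξ ^ p / dH ξ ^ p * (|f ξ| ^ p / (R - dH ξ) ^ p) = 0 := fun ξ h => by
    simp [image_eq_zero_of_notMem_tsupport h, Real.zero_rpow hp0]
  have zA : ∀ ξ : Heis n, ξ ∉ tsupport f → hNorm (hGrad f ξ) ^ p = 0 := fun ξ h => by
    rw [hNorm_zero h, Real.zero_rpow hp0]
  rw [setIntegral_eq_integral_of_forall_compl_eq_zero fun ξ h => zB ξ fun h' => h (hfs h'),
    setIntegral_eq_integral_of_forall_compl_eq_zero fun ξ h => zA ξ fun h' => h (hfs h')]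
  have iA : Integrable (fun ξ : Heis n => hNorm (hGrad f ξ) ^ p) := by
    refine integrable_of_Om hfc hfs (Continuous.continuousOn ?_) zA
    exact (continuous_hNorm hf1).rpow_const fun _ => Or.inr (by linarith)
  have iB : Integrable (fun ξ : Heis n =>
      zNorm ξ ^ p / dH ξ ^ p * (|f ξ| ^ p / (R - dH ξ) ^ p)) := by
    refine integrable_of_Om hfc hfs ?_ zB
    have cd : ContinuousOn (dH : Heis n → ℝ) (Om n R) := continuous_dH.continuousOn
    have cz : Continuous (zNorm : Heis n → ℝ) := continuous_sH.sqrt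
    refine ContinuousOn.mul (ContinuousOn.div ?_ ?_ ?_) (ContinuousOn.div ?_ ?_ ?_)
    · exact cz.continuousOn.rpow_const fun _ _ => Or.inr (by linarith)
    · exact cd.rpow_const fun _ _ => Or.inr (by linarith)
    · exact fun ξ h => (Real.rpow_pos_of_pos (dH_pos h.2) _).ne'
    · exact hf.continuous.continuousOn.abs.rpow_const fun _ _ => Or.inr (by linarith)
    · exact (continuousOn_const.sub cd).rpow_const fun _ _ => Or.inr (by linarith)
    · exact fun ξ h => (Real.rpow_pos_of_pos (sub_pos.2 h.1) _).ne'
  obtain ⟨iJ, hJ⟩ := J0_facts hp hf1 hfc hfs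
  have hfin : ∫ ξ : Heis n, ((p - 1) / p) ^ p *
      (zNorm ξ ^ p / dH ξ ^ p * (|f ξ| ^ p / (R - dH ξ) ^ p)) ≤
      ∫ ξ : Heis n, (hNorm (hGrad f ξ) ^ p + ((p - 1) / p) ^ (p - 1) * JE p R 0 f ξ) := by
    refine integral_mono (iB.const_mul _) (iA.add (iJ.const_mul _)) fun ξ => ?_
    by_cases h : ξ ∈ tsupport f
    · exact pointwise hp (hfs h)
    · change _ * _ ≤ _ + _ * _
      rw [zB ξ h, zA ξ h, JE_zero hp h]; simp
  rw [integral_const_mul, integral_add iA (iJ.const_mul _), integral_const_mul, hJ] at hfin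
  simpa using hfin
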